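/- A quantum-Wajsberg algebra (X, →, *, 1) is a Wajsberg algebra (equivalently, satisfies x∧y = y∧x for all x, y ∈ X) if and only if for all x, y ∈ X, x ≤ y implies x ≤_Q y. -/

import Mathlib

/-- A bounded involutive BE algebra. -/
class InvBE (X : Type*) where
  imp : X → X → X
  one : X
  zero : X
  be1 : ∀ x : X, imp x x = one
  be2 : ∀ x : X, imp x one = one
  be3 : ∀ x : X, imp one x = x
  be4 : ∀ x y z : X, imp x (imp y z) = imp y (imp x z)
  bound : ∀ x : X, imp zero x = one
  dn : ∀ x : X, imp (imp x zero) zero = x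

namespace InvBE

variable {X : Type*} [InvBE X]

/-- Negation: `x* = x → 0`. -/
def neg (x : X) : X := imp x zero

/-- `x ∨ y = (x → y) → y`. -/
def sup (x y : X) : X := imp (imp x y) y

/-- `x ∧ y = ((x* → y*) → y*)*`. -/
def inf (x y : X) : X := neg (imp (imp (neg x) (neg y)) (neg y))

/-- `x ≤ y` iff `x → y = 1`. -/
def le (x y : X) : Prop := imp x y = one

/-- `x ≤_Q y` iff `x = x ∧ y`. -/
def leQ (x y : X) : Prop := x = inf x y

end InvBE

/-!
Commutativity of `∧` gives `x ∧ y = y ∧ x = x` whenever `x ≤ y`. Conversely, if `≤` implies `≤_Q`,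
then applying this to `z* ≤ y*` for `y ≤ z` writes `z` as `(z → y) → y`. Since `a ≤ b → a` always
holds, `→` is then monotone on the right and, by contraposition, antitone on the left, so `∧` is
monotone on the left. From `x ∧ y ≤ x` and `x ∧ y ≤ y` it follows that
`x ∧ y = (x ∧ y) ∧ x ≤ y ∧ x`, and antisymmetry of `≤` finishes the proof.
-/

namespace InvBE

variable {X : Type*} [InvBE X]

theorem neg_neg (x : X) : neg (neg x) = x := dn x

theorem neg_imp_neg (x y : X) : imp (neg x) (neg y) = imp y x := by
  rw [neg, neg, be4, dn]

theorem neg_le_neg {x y : X} (h : le x y) : le (neg y) (neg x) :=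
  (neg_imp_neg y x).trans h

theorem le_imp (x y : X) : le x (imp y x) := by
  rw [le, be4, be1, be2]

theorem le_sup_left (x y : X) : le x (sup x y) := by
  rw [le, sup, be4, be1]

theorem le_sup_right (x y : X) : le y (sup x y) := le_imp y (imp x y)

theorem inf_eq_neg_sup (x y : X) : inf x y = neg (sup (neg x) (neg y)) := rfl

theorem inf_eq_neg_imp (x y : X) : inf x y = neg (imp (imp y x) (neg y)) := by
  rw [inf, neg_imp_neg]

theorem inf_neg_neg (x y : X) : inf (neg x) (neg y) = neg (sup x y) := by
  rw [inf_eq_neg_sup, neg_neg, neg_neg]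

theorem inf_le_left (x y : X) : le (inf x y) x := by
  simpa only [inf_eq_neg_sup, neg_neg] using neg_le_neg (le_sup_left (neg x) (neg y))

theorem inf_le_right (x y : X) : le (inf x y) y := by
  simpa only [inf_eq_neg_sup, neg_neg] using neg_le_neg (le_sup_right (neg x) (neg y))

theorem inf_eq_right {x y : X} (h : le y x) : inf x y = y := by
  rw [inf_eq_neg_imp, h, be3, neg_neg]

theorem imp_le_imp_left_of_sup_eq {y z : X} (h : sup z y = z) (x : X) :
    le (imp x y) (imp x z) := by
  have imp_eq : imp x z = imp (imp z y) (imp x y) := by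
    rw [be4, ← sup, h]
  rw [imp_eq]
  exact le_imp (imp x y) (imp z y)

/-- Every inequality `x ≤ y` is witnessed by the meet, i.e. `≤` implies `≤_Q`; for the monoid
operation `(x → y*)*` this makes `≤` the divisibility order. -/
def IsNaturallyOrdered (X : Type*) [InvBE X] : Prop := ∀ x y : X, le x y → leQ x y

namespace IsNaturallyOrdered

theorem le_antisymm (hX : IsNaturallyOrdered X) {x y : X} (hxy : le x y) (hyx : le y x) :
    x = y :=
  (hX x y hxy).trans (inf_eq_right hyx)

theorem sup_eq_left (hX : IsNaturallyOrdered X) {x y : X} (h : le y x) : sup x y = x := by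
  have neg_eq : neg x = neg (sup x y) :=
    (hX _ _ (neg_le_neg h)).trans (inf_neg_neg x y)
  rw [← neg_neg (sup x y), ← neg_eq, neg_neg]

theorem imp_le_imp_left (hX : IsNaturallyOrdered X) {y z : X} (h : le y z) (x : X) :
    le (imp x y) (imp x z) :=
  imp_le_imp_left_of_sup_eq (hX.sup_eq_left h) x

theorem imp_le_imp_right (hX : IsNaturallyOrdered X) {x y : X} (h : le x y) (z : X) :
    le (imp y z) (imp x z) := by
  rw [← neg_imp_neg z y, ← neg_imp_neg z x]
  exact hX.imp_le_imp_left (neg_le_neg h) (neg z)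

theorem inf_le_inf_right (hX : IsNaturallyOrdered X) {x y : X} (h : le x y) (z : X) :
    le (inf x z) (inf y z) := by
  rw [inf_eq_neg_imp x, inf_eq_neg_imp y]
  have imp_le : le (imp z x) (imp z y) := hX.imp_le_imp_left h z
  exact neg_le_neg (hX.imp_le_imp_right imp_le (neg z))

theorem inf_le_inf_swap (hX : IsNaturallyOrdered X) (x y : X) : le (inf x y) (inf y x) := by
  have inf_eq : inf x y = inf (inf x y) x := hX _ _ (inf_le_left x y)
  rw [inf_eq]
  exact hX.inf_le_inf_right (inf_le_right x y) x

theorem inf_comm (hX : IsNaturallyOrdered X) (x y : X) : inf x y = inf y x :=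
  hX.le_antisymm (hX.inf_le_inf_swap x y) (hX.inf_le_inf_swap y x)

end IsNaturallyOrdered

theorem leQ_of_le_of_inf_comm {x y : X} (comm : inf x y = inf y x) (h : le x y) : leQ x y :=
  (comm.trans (inf_eq_right h)).symm

end InvBE

open InvBE in
theorem stmt_16_general {X : Type*} [InvBE X] :
    (∀ x y : X, inf x y = inf y x) ↔ (∀ x y : X, le x y → leQ x y) :=
  ⟨fun comm x y => leQ_of_le_of_inf_comm (comm x y), IsNaturallyOrdered.inf_comm⟩

open InvBE in
theorem stmt_16 {X : Type*} [InvBE X]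
    (qw : ∀ x y z : X, imp x (inf (inf x y) (inf z x)) = inf (imp x y) (imp x z)) :
    (∀ x y : X, inf x y = inf y x) ↔ (∀ x y : X, le x y → leQ x y) :=
  stmt_16_general
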